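/- Under the hypotheses of the data-driven feature space dynamics theorem (N ≥ ν, T ≥ N + μ − 1 ≥ nominal data horizon, S a matrix with orthonormal columns spanning Col(Y_{N,T}), and M any matrix with M W = W⃗), let u : ℕ → ℝ^m satisfy u(k) = 0 for all k < T, and let y denote the output of the system driven by u from x0. Then the one-step output prediction error at time T satisfies y_{T−N+1:T} − S M S^⊤ y_{T−N:T−1} = C_N u_{T−N+1:T}, where u_{T−N+1:T} = (0, …, 0, u(T)). -/

import Mathlib

open Matrix

noncomputable section

/-- The observability matrix `O_N = [C; CA; …; CA^{N-1}]`, with block rows indexed by `Fin N`. -/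
def obsMat {n p : ℕ} (A : Matrix (Fin n) (Fin n) ℝ) (C : Matrix (Fin p) (Fin n) ℝ)
    (N : ℕ) : Matrix (Fin N × Fin p) (Fin n) ℝ :=
  fun ir j => (C * A ^ (ir.1 : ℕ)) ir.2 j

/-- The observability index `ν = min {N : Rank O_N = Rank O_{N+j} for all j}`. -/
def obsIndex {n p : ℕ} (A : Matrix (Fin n) (Fin n) ℝ) (C : Matrix (Fin p) (Fin n) ℝ) : ℕ :=
  sInf {N : ℕ | ∀ j : ℕ, (obsMat A C (N + j)).rank = (obsMat A C N).rank}

/-- The Krylov/excitability matrix `E_N(x) = [x, Ax, …, A^{N-1} x]`. -/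
def excMat {n : ℕ} (A : Matrix (Fin n) (Fin n) ℝ) (x : Fin n → ℝ) (N : ℕ) :
    Matrix (Fin n) (Fin N) ℝ :=
  fun i k => (A ^ (k : ℕ)).mulVec x i

/-- The excitability index at `x`: `μ(x) = min {i : Rank E_i(x) = Rank E_{i+j}(x) for all j}`. -/
def excIndexAt {n : ℕ} (A : Matrix (Fin n) (Fin n) ℝ) (x : Fin n → ℝ) : ℕ :=
  sInf {i : ℕ | ∀ j : ℕ, (excMat A x (i + j)).rank = (excMat A x i).rank}

/-- The excitability index `μ = max_{x ∈ ℝⁿ} μ(x)`. -/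
def excIndex {n : ℕ} (A : Matrix (Fin n) (Fin n) ℝ) : ℕ :=
  sSup (Set.range (excIndexAt A))

/-- The Hankel matrix `Y_{N,T}` of the nominal output `y(k) = C A^k x0`; its `j`-th column is
the stacked vector `(y(j), …, y(j+N-1))`. -/
def hankelMat {n p : ℕ} (A : Matrix (Fin n) (Fin n) ℝ) (C : Matrix (Fin p) (Fin n) ℝ)
    (x0 : Fin n → ℝ) (N T : ℕ) : Matrix (Fin N × Fin p) (Fin (T - N + 1)) ℝ :=
  fun ir j => (C * A ^ ((j : ℕ) + (ir.1 : ℕ))).mulVec x0 ir.2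

/-- The Hankel information `Γ({y(k)}) = sup {Rank Y_{N,T} : N ≤ T}`. -/
def hankelInfo {n p : ℕ} (A : Matrix (Fin n) (Fin n) ℝ) (C : Matrix (Fin p) (Fin n) ℝ)
    (x0 : Fin n → ℝ) : ℕ :=
  sSup {r : ℕ | ∃ N T : ℕ, N ≤ T ∧ r = (hankelMat A C x0 N T).rank}

/-- The block lower-triangular Toeplitz matrix `C_N` (the `(i,j)` block is `D` if `i = j`,
`C A^{i-j-1} B` if `i > j`, and `0` if `i < j`). -/
def ctrlMat {n p m : ℕ} (A : Matrix (Fin n) (Fin n) ℝ) (B : Matrix (Fin n) (Fin m) ℝ)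
    (C : Matrix (Fin p) (Fin n) ℝ) (D : Matrix (Fin p) (Fin m) ℝ) (N : ℕ) :
    Matrix (Fin N × Fin p) (Fin N × Fin m) ℝ :=
  fun ir js =>
    if (ir.1 : ℕ) = (js.1 : ℕ) then D ir.2 js.2
    else if (js.1 : ℕ) < (ir.1 : ℕ) then
      (C * A ^ ((ir.1 : ℕ) - (js.1 : ℕ) - 1) * B) ir.2 js.2
    else 0

/-- The state trajectory of `x(k+1) = A x(k) + B u(k)` from initial state `x0`. -/
def traj {n m : ℕ} (A : Matrix (Fin n) (Fin n) ℝ) (B : Matrix (Fin n) (Fin m) ℝ)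
    (u : ℕ → Fin m → ℝ) (x0 : Fin n → ℝ) : ℕ → Fin n → ℝ
  | 0 => x0
  | k + 1 => A.mulVec (traj A B u x0 k) + B.mulVec (u k)

/-- The output `y(k) = C x(k) + D u(k)` of the system driven by input `u` from `x0`. -/
def output {n p m : ℕ} (A : Matrix (Fin n) (Fin n) ℝ) (B : Matrix (Fin n) (Fin m) ℝ)
    (C : Matrix (Fin p) (Fin n) ℝ) (D : Matrix (Fin p) (Fin m) ℝ)
    (u : ℕ → Fin m → ℝ) (x0 : Fin n → ℝ) (k : ℕ) : Fin p → ℝ :=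
  C.mulVec (traj A B u x0 k) + D.mulVec (u k)

/-- The stacked nominal output vector `y_{k:k+N-1} = (y(k), …, y(k+N-1))`, `y(k) = C A^k x0`. -/
def nomStack {n p : ℕ} (A : Matrix (Fin n) (Fin n) ℝ) (C : Matrix (Fin p) (Fin n) ℝ)
    (x0 : Fin n → ℝ) (N k : ℕ) : Fin N × Fin p → ℝ :=
  fun ir => (C * A ^ (k + (ir.1 : ℕ))).mulVec x0 ir.2

/-!
Iterating the state equation gives `y_{k:k+N-1} = O_N x(k) + C_N u_{k:k+N-1}` for every input.
While the input vanishes, `O_N x(k)` is the nominal stack, so it remains to see that `S M Sᵀ` maps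
the nominal stack at time `T - N` to the one at time `T - N + 1`. The equation `M W = W⃗` says this
in feature coordinates; it lifts back along `S` because `A^{T-N+1} x0` already lies in the Krylov
space spanned by the earlier states: by `T ≥ N + μ - 1` the dimension of that space has stopped
growing. So the new nominal stack is in the column space of the Hankel matrix, hence in that of `S`.
-/

theorem mulVec_eq_succ_of_mul_eq_shift {R κ : Type*} [NonUnitalNonAssocSemiring R] [Fintype κ]
    {L : ℕ} {w : ℕ → κ → R} {M : Matrix κ κ R} {W Wvec : Matrix κ (Fin L) R}
    (hW : ∀ i j, W i j = w j i) (hWvec : ∀ i j, Wvec i j = w (j + 1) i) (hM : M * W = Wvec)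
    (k : Fin L) : M *ᵥ w k = w (k + 1) := by
  ext i
  simpa only [mulVec, dotProduct, mul_apply, hW, hWvec] using congrFun₂ hM i k

section Projection

variable {R ι κ : Type*} [CommSemiring R] [Fintype ι] [Fintype κ]

theorem mulVec_transpose_mulVec_of_mem_range [DecidableEq κ] {S : Matrix ι κ R}
    (hS : Sᵀ * S = 1) {v : ι → R} (hv : v ∈ LinearMap.range S.mulVecLin) :
    S *ᵥ Sᵀ *ᵥ v = v := by
  obtain ⟨c, rfl⟩ := hv
  rw [mulVecLin_apply, mulVec_mulVec c, hS, one_mulVec]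

theorem mul_mul_transpose_mulVec_eq [DecidableEq κ] {S : Matrix ι κ R} (hS : Sᵀ * S = 1)
    {M : Matrix κ κ R} {v v' : ι → R} (hM : M *ᵥ Sᵀ *ᵥ v = Sᵀ *ᵥ v')
    (hv' : v' ∈ LinearMap.range S.mulVecLin) :
    (S * M * Sᵀ) *ᵥ v = v' := by
  rw [← mulVec_mulVec, ← mulVec_mulVec, hM, mulVec_transpose_mulVec_of_mem_range hS hv']

end Projection

section Krylov

variable {R ι : Type*} [CommRing R] [Fintype ι] [DecidableEq ι]

/-- The Krylov space of order `N`, spanned by `x, Ax, …, A^{N-1} x`; over `ℝ` it is the column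
space of the excitability matrix `E_N(x)`. -/
def krylovSpace (A : Matrix ι ι R) (x : ι → R) (N : ℕ) : Submodule R (ι → R) :=
  Submodule.span R ((fun k => (A ^ k) *ᵥ x) '' Set.Iio N)

variable (A : Matrix ι ι R) (x : ι → R)

theorem krylovSpace_mono : Monotone (krylovSpace A x) := fun _ _ h =>
  Submodule.span_mono (Set.image_mono (Set.Iio_subset_Iio h))

theorem krylovSpace_zero : krylovSpace A x 0 = ⊥ := by
  simp [krylovSpace]

theorem pow_mulVec_mem_krylovSpace {k N : ℕ} (h : k < N) :
    (A ^ k) *ᵥ x ∈ krylovSpace A x N :=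
  Submodule.subset_span ⟨k, h, rfl⟩

theorem aeval_mulVec_mem_krylovSpace {P : Polynomial R} {N : ℕ} (hP : P.degree < N) :
    (Polynomial.aeval A P) *ᵥ x ∈ krylovSpace A x N := by
  rw [Polynomial.aeval_eq_sum_range, sum_mulVec]
  refine Submodule.sum_mem _ fun i _ => ?_
  rw [smul_mulVec]
  rcases eq_or_ne (P.coeff i) 0 with hi | hi
  · simp [hi]
  · have hiN : i < N := by exact_mod_cast (Polynomial.le_degree_of_ne_zero hi).trans_lt hP
    exact Submodule.smul_mem _ _ (pow_mulVec_mem_krylovSpace A x hiN)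

theorem pow_mulVec_mem_krylovSpace_card (k : ℕ) :
    (A ^ k) *ᵥ x ∈ krylovSpace A x (Fintype.card ι) := by
  nontriviality R
  rw [pow_eq_aeval_mod_charpoly]
  apply aeval_mulVec_mem_krylovSpace
  rw [← A.charpoly_degree_eq_dim]
  exact Polynomial.degree_modByMonic_lt _ A.charpoly_monic

theorem krylovSpace_eq_of_card_le {N : ℕ} (hN : Fintype.card ι ≤ N) :
    krylovSpace A x N = krylovSpace A x (Fintype.card ι) := by
  refine le_antisymm (Submodule.span_le.2 ?_) (krylovSpace_mono A x hN)
  rintro _ ⟨k, -, rfl⟩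
  exact pow_mulVec_mem_krylovSpace_card A x k

end Krylov

section Excitability

variable {n : ℕ} (A : Matrix (Fin n) (Fin n) ℝ) (x : Fin n → ℝ)

theorem range_excMat (N : ℕ) :
    LinearMap.range (excMat A x N).mulVecLin = krylovSpace A x N := by
  rw [range_mulVecLin, krylovSpace, ← Fin.range_val, ← Set.range_comp]
  rfl

theorem rank_excMat (N : ℕ) :
    (excMat A x N).rank = Module.finrank ℝ (krylovSpace A x N) := by
  rw [Matrix.rank, range_excMat]

theorem rank_excMat_dim_add (j : ℕ) :
    (excMat A x (n + j)).rank = (excMat A x n).rank := by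
  have h := krylovSpace_eq_of_card_le A x (N := n + j) (by simp)
  rw [Fintype.card_fin] at h
  rw [rank_excMat, rank_excMat, h]

theorem excIndexAt_le_dim : excIndexAt A x ≤ n :=
  Nat.sInf_le (rank_excMat_dim_add A x)

theorem excIndexAt_le_excIndex : excIndexAt A x ≤ excIndex A :=
  le_csSup ⟨n, Set.forall_mem_range.2 (excIndexAt_le_dim A)⟩ ⟨x, rfl⟩

variable {A x}

theorem krylovSpace_eq_of_excIndexAt_le {N : ℕ} (hN : excIndexAt A x ≤ N) :
    krylovSpace A x N = krylovSpace A x (excIndexAt A x) := by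
  have hconst : ∀ j, (excMat A x (excIndexAt A x + j)).rank = (excMat A x (excIndexAt A x)).rank :=
    Nat.sInf_mem (s := {i | ∀ j, (excMat A x (i + j)).rank = (excMat A x i).rank})
      ⟨n, rank_excMat_dim_add A x⟩
  obtain ⟨j, rfl⟩ := Nat.exists_eq_add_of_le hN
  have hrank := hconst j
  rw [rank_excMat, rank_excMat] at hrank
  exact (Submodule.eq_of_le_of_finrank_eq (krylovSpace_mono A x hN) hrank.symm).symm

theorem pow_mulVec_mem_krylovSpace_of_excIndexAt_le {N : ℕ} (hN : excIndexAt A x ≤ N) :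
    (A ^ N) *ᵥ x ∈ krylovSpace A x N := by
  rw [krylovSpace_eq_of_excIndexAt_le hN,
    ← krylovSpace_eq_of_excIndexAt_le (hN.trans N.le_succ)]
  exact pow_mulVec_mem_krylovSpace A x N.lt_succ_self

theorem excIndexAt_pos (hx : x ≠ 0) : 0 < excIndexAt A x := by
  by_contra! h
  have hmem := pow_mulVec_mem_krylovSpace_of_excIndexAt_le h
  rw [krylovSpace_zero, pow_zero, one_mulVec] at hmem
  exact hx hmem

variable (A) in
theorem excIndex_pos (hn : 0 < n) : 0 < excIndex A := by
  have : NeZero n := ⟨hn.ne'⟩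
  exact (excIndexAt_pos one_ne_zero).trans_le (excIndexAt_le_excIndex A 1)

end Excitability

section NominalOutput

variable {n p : ℕ} (A : Matrix (Fin n) (Fin n) ℝ) (C : Matrix (Fin p) (Fin n) ℝ)
  (x0 : Fin n → ℝ) (N : ℕ)

theorem obsMat_mulVec_apply (x : Fin n → ℝ) (ir : Fin N × Fin p) :
    (obsMat A C N *ᵥ x) ir = (C *ᵥ (A ^ (ir.1 : ℕ)) *ᵥ x) ir.2 := by
  rw [mulVec_mulVec]
  rfl

theorem nomStack_eq_obsMat_mulVec (k : ℕ) :
    nomStack A C x0 N k = obsMat A C N *ᵥ (A ^ k) *ᵥ x0 := by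
  ext ir
  rw [obsMat_mulVec_apply, mulVec_mulVec, mulVec_mulVec, Matrix.mul_assoc, ← pow_add, add_comm]
  rfl

theorem hankelMat_eq_obsMat_mul_excMat (T : ℕ) :
    hankelMat A C x0 N T = obsMat A C N * excMat A x0 (T - N + 1) := by
  ext ir j
  exact congrFun (nomStack_eq_obsMat_mulVec A C x0 N j) ir

theorem nomStack_mem_range_hankelMat {T : ℕ} (h : excIndexAt A x0 ≤ T - N + 1) :
    nomStack A C x0 N (T - N + 1) ∈ LinearMap.range (hankelMat A C x0 N T).mulVecLin := by
  have hmem := pow_mulVec_mem_krylovSpace_of_excIndexAt_le h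
  rw [← range_excMat] at hmem
  rw [hankelMat_eq_obsMat_mul_excMat, mulVecLin_mul, LinearMap.range_comp,
    nomStack_eq_obsMat_mulVec]
  exact Submodule.mem_map_of_mem hmem

end NominalOutput

section DrivenOutput

/-- The stacked window `y_{k:k+N-1} = (y(k), …, y(k+N-1))` of a vector-valued signal, indexed like
the block rows of `obsMat` and `ctrlMat`. -/
def stack {α ι : Type*} (y : ℕ → ι → α) (N k : ℕ) : Fin N × ι → α :=
  fun ir => y (k + ir.1) ir.2

theorem stack_eq_zero {α ι : Type*} [Zero α] {u : ℕ → ι → α} {N k : ℕ}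
    (hu : ∀ j < k + N, u j = 0) : stack u N k = 0 := by
  ext ir
  exact congrFun (hu _ (Nat.add_lt_add_left ir.1.is_lt k)) ir.2

variable {n p m : ℕ} (A : Matrix (Fin n) (Fin n) ℝ) (B : Matrix (Fin n) (Fin m) ℝ)
  (C : Matrix (Fin p) (Fin n) ℝ) (D : Matrix (Fin p) (Fin m) ℝ)
  (u : ℕ → Fin m → ℝ) (x0 : Fin n → ℝ)

theorem traj_add (k i : ℕ) :
    traj A B u x0 (k + i) = (A ^ i) *ᵥ traj A B u x0 k +
      ∑ j ∈ Finset.range i, (A ^ (i - j - 1) * B) *ᵥ u (k + j) := by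
  induction i with
  | zero => simp
  | succ i ih =>
    have hshift : ∀ j ∈ Finset.range i, A *ᵥ (A ^ (i - j - 1) * B) *ᵥ u (k + j) =
        (A ^ (i + 1 - j - 1) * B) *ᵥ u (k + j) := fun j hj => by
      have hexp : i + 1 - j - 1 = i - j - 1 + 1 := by
        have := Finset.mem_range.1 hj
        omega
      rw [hexp, pow_succ', mulVec_mulVec, Matrix.mul_assoc]
    rw [← add_assoc, traj, ih, mulVec_add, mulVec_sum, Finset.sum_congr rfl hshift, mulVec_mulVec,
      ← pow_succ', Finset.sum_range_succ, add_assoc]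
    simp

variable {u} in
theorem traj_eq_pow_mulVec {k : ℕ} (hu : ∀ j < k, u j = 0) :
    traj A B u x0 k = (A ^ k) *ᵥ x0 := by
  have hsum : ∑ j ∈ Finset.range k, (A ^ (k - j - 1) * B) *ᵥ u (0 + j) = 0 :=
    Finset.sum_eq_zero fun j hj => by rw [zero_add, hu j (Finset.mem_range.1 hj), mulVec_zero]
  rw [← zero_add k, traj_add, hsum, add_zero, zero_add, traj]

theorem ctrlMat_mulVec_stack_apply (N k : ℕ) (ir : Fin N × Fin p) :
    (ctrlMat A B C D N *ᵥ stack u N k) ir =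
      (∑ j ∈ Finset.range ir.1, (C * A ^ (ir.1 - j - 1 : ℕ) * B) *ᵥ u (k + j) +
        D *ᵥ u (k + ir.1)) ir.2 := by
  obtain ⟨i, r⟩ := ir
  let block (j : ℕ) : Matrix (Fin p) (Fin m) ℝ :=
    if (i : ℕ) = j then D else if j < i then C * A ^ (i - j - 1 : ℕ) * B else 0
  have hblock (j : Fin N) (s : Fin m) : ctrlMat A B C D N (i, r) (j, s) = block j r s := by
    simp only [ctrlMat, block]
    split_ifs <;> rfl
  have hrows : (ctrlMat A B C D N *ᵥ stack u N k) (i, r) =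
      (∑ j ∈ Finset.range N, block j *ᵥ u (k + j)) r := by
    simp only [mulVec, dotProduct, Fintype.sum_prod_type, hblock, stack, Finset.sum_apply,
      Finset.sum_range]
  have htrunc : ∑ j ∈ Finset.range N, block j *ᵥ u (k + j) =
      ∑ j ∈ Finset.range (i + 1), block j *ᵥ u (k + j) := by
    refine (Finset.sum_subset (Finset.range_subset_range.2 i.is_lt) fun j _ hj => ?_).symm
    have hij : (i : ℕ) < j := by simpa using hj
    simp [block, hij.ne, hij.not_gt]
  have hlower : ∀ j ∈ Finset.range i,
      block j *ᵥ u (k + j) = (C * A ^ (i - j - 1 : ℕ) * B) *ᵥ u (k + j) := fun j hj => by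
    have hji := Finset.mem_range.1 hj
    simp [block, hji.ne', hji]
  rw [hrows, htrunc, Finset.sum_range_succ, Finset.sum_congr rfl hlower]
  simp [block]

theorem stack_output (N k : ℕ) :
    stack (output A B C D u x0) N k =
      obsMat A C N *ᵥ traj A B u x0 k + ctrlMat A B C D N *ᵥ stack u N k := by
  ext ir
  rw [Pi.add_apply, obsMat_mulVec_apply, ctrlMat_mulVec_stack_apply, ← Pi.add_apply, ← add_assoc]
  simp only [stack, output, traj_add, mulVec_add, mulVec_sum, mulVec_mulVec, Matrix.mul_assoc]

variable {u}

theorem stack_output_eq_nomStack_add {N k : ℕ} (hu : ∀ j < k, u j = 0) :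
    stack (output A B C D u x0) N k =
      nomStack A C x0 N k + ctrlMat A B C D N *ᵥ stack u N k := by
  rw [stack_output, traj_eq_pow_mulVec A B x0 hu, nomStack_eq_obsMat_mulVec]

theorem stack_output_eq_nomStack {N k : ℕ} (hu : ∀ j < k + N, u j = 0) :
    stack (output A B C D u x0) N k = nomStack A C x0 N k := by
  rw [stack_output_eq_nomStack_add A B C D x0 fun j hj => hu j (hj.trans_le (k.le_add_right N)),
    stack_eq_zero hu, mulVec_zero, add_zero]

end DrivenOutput

section ZeroDimensionalState

variable {p m : ℕ} (A : Matrix (Fin 0) (Fin 0) ℝ) (B : Matrix (Fin 0) (Fin m) ℝ)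
  (C : Matrix (Fin p) (Fin 0) ℝ) (D : Matrix (Fin p) (Fin m) ℝ)
  (u : ℕ → Fin m → ℝ) (x0 : Fin 0 → ℝ) (N : ℕ)

theorem hankelMat_of_dim_zero (T : ℕ) : hankelMat A C x0 N T = 0 := by
  rw [hankelMat_eq_obsMat_mul_excMat, Subsingleton.elim (excMat A x0 _) 0, Matrix.mul_zero]

theorem stack_output_of_dim_zero (k : ℕ) :
    stack (output A B C D u x0) N k = ctrlMat A B C D N *ᵥ stack u N k := by
  rw [stack_output, Subsingleton.elim (traj A B u x0 k) 0, mulVec_zero, zero_add]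

end ZeroDimensionalState

theorem one_step_prediction_error_general {n p m q : ℕ}
    (A : Matrix (Fin n) (Fin n) ℝ) (B : Matrix (Fin n) (Fin m) ℝ)
    (C : Matrix (Fin p) (Fin n) ℝ) (D : Matrix (Fin p) (Fin m) ℝ)
    (x0 : Fin n → ℝ) (N T : ℕ) (hNT : N ≤ T) (hT : N + excIndexAt A x0 - 1 ≤ T)
    (S : Matrix (Fin N × Fin p) (Fin q) ℝ) (hortho : Sᵀ * S = 1)
    (hcol : LinearMap.range (hankelMat A C x0 N T).mulVecLin ≤ LinearMap.range S.mulVecLin)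
    (w : ℕ → Fin q → ℝ) (hw : ∀ k, w k = Sᵀ *ᵥ nomStack A C x0 N k)
    (W Wvec : Matrix (Fin q) (Fin (T - N + 1)) ℝ)
    (hW : ∀ i j, W i j = w j i) (hWvec : ∀ i j, Wvec i j = w (j + 1) i)
    (M : Matrix (Fin q) (Fin q) ℝ) (hM : M * W = Wvec)
    (u : ℕ → Fin m → ℝ) (hu : ∀ k < T, u k = 0) :
    stack (output A B C D u x0) N (T - N + 1) -
        (S * M * Sᵀ) *ᵥ stack (output A B C D u x0) N (T - N) =
      ctrlMat A B C D N *ᵥ stack u N (T - N + 1) := by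
  rcases N.eq_zero_or_pos with rfl | hN
  · exact Subsingleton.elim _ _
  have hshift : M *ᵥ Sᵀ *ᵥ nomStack A C x0 N (T - N) = Sᵀ *ᵥ nomStack A C x0 N (T - N + 1) := by
    rw [← hw, ← hw]
    exact mulVec_eq_succ_of_mul_eq_shift hW hWvec hM (Fin.last (T - N))
  have hpredict : (S * M * Sᵀ) *ᵥ nomStack A C x0 N (T - N) = nomStack A C x0 N (T - N + 1) :=
    mul_mul_transpose_mulVec_eq hortho hshift
      (hcol (nomStack_mem_range_hankelMat A C x0 N (by omega)))
  have hquiet : stack (output A B C D u x0) N (T - N) = nomStack A C x0 N (T - N) :=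
    stack_output_eq_nomStack A B C D x0 fun j hj => hu j (by omega)
  have hdriven : stack (output A B C D u x0) N (T - N + 1) =
      nomStack A C x0 N (T - N + 1) + ctrlMat A B C D N *ᵥ stack u N (T - N + 1) :=
    stack_output_eq_nomStack_add A B C D x0 fun j hj => hu j (by omega)
  rw [hdriven, hquiet, hpredict, add_sub_cancel_left]

/-- **One-step prediction error of the data-driven monitor.** Under the hypotheses of the
data-driven feature space dynamics theorem (`N ≥ ν`, `T ≥ N + μ − 1`, `S` with orthonormal
columns spanning `Col Y_{N,T}`, and `M` any matrix with `M W = W⃗`), if `u(k) = 0` for all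
`k < T` and `y` is the output of the system driven by `u` from `x0`, then
`y_{T−N+1:T} − S M Sᵀ y_{T−N:T−1} = C_N u_{T−N+1:T}` (with `u_{T−N+1:T} = (0, …, 0, u(T))`). -/
theorem one_step_prediction_error {n p m q : ℕ}
    (A : Matrix (Fin n) (Fin n) ℝ) (B : Matrix (Fin n) (Fin m) ℝ)
    (C : Matrix (Fin p) (Fin n) ℝ) (D : Matrix (Fin p) (Fin m) ℝ)
    (x0 : Fin n → ℝ)
    (N T : ℕ) (hN : obsIndex A C ≤ N) (hT : N + excIndex A - 1 ≤ T)
    (S : Matrix (Fin N × Fin p) (Fin q) ℝ)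
    (hortho : Sᵀ * S = 1)
    (hcol : LinearMap.range S.mulVecLin = LinearMap.range (hankelMat A C x0 N T).mulVecLin)
    (w : ℕ → Fin q → ℝ)
    (hw : ∀ k : ℕ, w k = Sᵀ.mulVec (nomStack A C x0 N k))
    (W Wvec : Matrix (Fin q) (Fin (T - N + 1)) ℝ)
    (hW : ∀ i j, W i j = w (j : ℕ) i)
    (hWvec : ∀ i j, Wvec i j = w ((j : ℕ) + 1) i)
    (M : Matrix (Fin q) (Fin q) ℝ) (hM : M * W = Wvec)
    (u : ℕ → Fin m → ℝ) (hu : ∀ k : ℕ, k < T → u k = 0) :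
    (fun ir : Fin N × Fin p => output A B C D u x0 (T - N + 1 + (ir.1 : ℕ)) ir.2) -
      (S * M * Sᵀ).mulVec
        (fun ir : Fin N × Fin p => output A B C D u x0 (T - N + (ir.1 : ℕ)) ir.2) =
      (ctrlMat A B C D N).mulVec
        (fun js : Fin N × Fin m => u (T - N + 1 + (js.1 : ℕ)) js.2) := by
  rcases n.eq_zero_or_pos with rfl | hn
  -- As `excIndex A = 0` here, `N = T + 1` can occur, where `T - N` truncates to `0`.
  · have hS : S = 0 := by
      rw [hankelMat_of_dim_zero, mulVecLin_zero, LinearMap.range_zero,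
        LinearMap.range_eq_bot] at hcol
      exact toLin'.map_eq_zero_iff.1 hcol
    rw [hS, Matrix.zero_mul, Matrix.zero_mul, zero_mulVec, sub_zero]
    exact stack_output_of_dim_zero A B C D u x0 N (T - N + 1)
  · have hμ := excIndex_pos A hn
    have hμ₀ := excIndexAt_le_excIndex A x0
    exact one_step_prediction_error_general A B C D x0 N T (by omega) (by omega) S hortho hcol.ge
      w hw W Wvec hW hWvec M hM u hu
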